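/- (Plug-in accuracy bound.) Let A, Y, W be random variables on a finite probability space with values in finite sets, with A taking values in a finite set 𝒜 with |𝒜| ≥ 2, and let g be a function from the value set of Y into 𝒜. Set Acc = 1 − P(g(Y) ≠ A) and C = H(Y | W). Let h ≥ 1 be a natural number (hop count), L > 0 a real number (context length), and β₀ ≥ 0, α > 0, γ ≥ 1 real parameters, and suppose the information demand satisfies H(A | W) = β₀ + α·L·γ^{h−1} and log₂(|𝒜| − 1) ≤ β₀ + α·L·γ^{h−1}. Then Acc ≤ min{ 1, (C + 1) / (β₀ + α·L·γ^{h−1}) }. -/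

import Mathlib

open scoped Classical
open Finset

namespace InfoQA

variable {Ω : Type*} [Fintype Ω]

/-- Probability of an event under a pmf `p` on a finite sample space. -/
noncomputable def pr (p : Ω → ℝ) (S : Ω → Prop) : ℝ :=
  ∑ ω, if S ω then p ω else 0

/-- Distribution of a random variable `X` under `p`. -/
noncomputable def distOf (p : Ω → ℝ) {α : Type*} (X : Ω → α) (a : α) : ℝ :=
  pr p (fun ω => X ω = a)

/-- Shannon entropy of a random variable (logarithm base 2). -/
noncomputable def H (p : Ω → ℝ) {α : Type*} [Fintype α] (X : Ω → α) : ℝ :=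
  -∑ a, distOf p X a * Real.logb 2 (distOf p X a)

/-- Conditional entropy `H(X | Z) = H(X, Z) - H(Z)` (base 2). -/
noncomputable def condH (p : Ω → ℝ) {α β : Type*} [Fintype α] [Fintype β]
    (X : Ω → α) (Z : Ω → β) : ℝ :=
  H p (fun ω => (X ω, Z ω)) - H p Z

/-- Conditional mutual information `I(X ; Y | Z) = H(X | Z) - H(X | (Y, Z))` (base 2). -/
noncomputable def condMI (p : Ω → ℝ) {α β γ : Type*} [Fintype α] [Fintype β] [Fintype γ]
    (X : Ω → α) (Y : Ω → β) (Z : Ω → γ) : ℝ :=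
  condH p X Z - condH p X (fun ω => (Y ω, Z ω))

/-- Binary entropy function (base 2); `Real.logb 2 0 = 0`, so `binEnt 0 = binEnt 1 = 0`. -/
noncomputable def binEnt (x : ℝ) : ℝ :=
  -(x * Real.logb 2 x) - (1 - x) * Real.logb 2 (1 - x)

end InfoQA

open InfoQA

/-!
The reference measure in Gibbs' inequality is a free choice. Taking for the law of `A` given the
guess the symmetric channel whose error rate is the error probability `e` of the guess yields Fano's
inequality `H(A | Y, W) ≤ h(e) + e · log₂(|𝒜| - 1)`. With `H(A | W) ≤ H(Y | W) + H(A | Y, W)` and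
`h(e) ≤ 1`, a demand `D` that is at most `H(A | W)` and at least `log₂(|𝒜| - 1)` satisfies
`D ≤ C + 1 + e · D`.
-/

namespace InfoQA

section Gibbs

variable {b : ℝ}

theorem mul_logb_sub_mul_logb_le (hb : 1 < b) {x y : ℝ} (hx : 0 ≤ x) (hy : 0 ≤ y)
    (hxy : y = 0 → x = 0) :
    x * Real.logb b y - x * Real.logb b x ≤ (y - x) / Real.log b := by
  have hlogb : 0 < Real.log b := Real.log_pos hb
  rcases hx.eq_or_lt with rfl | hx
  · simpa using div_nonneg hy hlogb.le
  have hy : 0 < y := hy.lt_of_ne' fun hy0 => hx.ne' (hxy hy0)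
  calc x * Real.logb b y - x * Real.logb b x
      = x * Real.log (y / x) / Real.log b := by
        rw [Real.log_div hy.ne' hx.ne', Real.logb, Real.logb]
        ring
    _ ≤ x * (y / x - 1) / Real.log b := by
        gcongr
        exact Real.log_le_sub_one_of_pos (div_pos hy hx)
    _ = (y - x) / Real.log b := by field_simp

theorem sum_mul_logb_le_sum_mul_logb_self (hb : 1 < b) {ι : Type*} {s : Finset ι} {P Q : ι → ℝ}
    (hP : ∀ i ∈ s, 0 ≤ P i) (hQ : ∀ i ∈ s, 0 ≤ Q i) (hPQ : ∀ i ∈ s, Q i = 0 → P i = 0)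
    (hsum : ∑ i ∈ s, Q i ≤ ∑ i ∈ s, P i) :
    ∑ i ∈ s, P i * Real.logb b (Q i) ≤ ∑ i ∈ s, P i * Real.logb b (P i) := by
  rw [← sub_nonpos, ← Finset.sum_sub_distrib]
  calc ∑ i ∈ s, (P i * Real.logb b (Q i) - P i * Real.logb b (P i))
      ≤ ∑ i ∈ s, (Q i - P i) / Real.log b := Finset.sum_le_sum fun i hi =>
        mul_logb_sub_mul_logb_le hb (hP i hi) (hQ i hi) (hPQ i hi)
    _ = (∑ i ∈ s, Q i - ∑ i ∈ s, P i) / Real.log b := by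
        rw [← Finset.sum_div, Finset.sum_sub_distrib]
    _ ≤ 0 := div_nonpos_of_nonpos_of_nonneg (sub_nonpos.2 hsum) (Real.log_pos hb).le

end Gibbs

theorem binEnt_eq_binEntropy_div_log_two (x : ℝ) : binEnt x = Real.binEntropy x / Real.log 2 := by
  rw [binEnt, Real.binEntropy, Real.log_inv, Real.log_inv, Real.logb, Real.logb]
  ring

theorem binEnt_le_one (x : ℝ) : binEnt x ≤ 1 := by
  rw [binEnt_eq_binEntropy_div_log_two]
  exact div_le_one_of_le₀ Real.binEntropy_le_log_two (Real.log_pos one_lt_two).le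

section SymmetricChannel

variable {α : Type*} [Fintype α]

theorem card_sub_one_ne_zero_of_ne {a b : α} (hab : a ≠ b) : (Fintype.card α : ℝ) - 1 ≠ 0 := by
  have hcard : (1 : ℝ) < Fintype.card α := by
    exact_mod_cast Fintype.one_lt_card_iff.2 ⟨a, b, hab⟩
  exact (sub_pos.2 hcard).ne'

/-- Transition probability from `x` to `a` of the symmetric channel on `α` with error rate `e`:
the input is received correctly with probability `1 - e`, and every other letter is received with
the same probability. On a one-letter alphabet the other letters are absent and the row sum is
`1 - e`, so the rows are only subprobabilities in general. -/
noncomputable def symmetricChannel (e : ℝ) (x a : α) : ℝ :=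
  if x = a then 1 - e else e / ((Fintype.card α : ℝ) - 1)

theorem symmetricChannel_nonneg {e : ℝ} (he₀ : 0 ≤ e) (he₁ : e ≤ 1) (x a : α) :
    0 ≤ symmetricChannel e x a := by
  have hcard : (1 : ℝ) ≤ Fintype.card α := by
    exact_mod_cast Fintype.card_pos_iff.2 ⟨x⟩
  rw [symmetricChannel]
  split_ifs
  · exact sub_nonneg.2 he₁
  · exact div_nonneg he₀ (sub_nonneg.2 hcard)

theorem sum_symmetricChannel_le_one {e : ℝ} (he : 0 ≤ e) (x : α) :
    ∑ a, symmetricChannel e x a ≤ 1 := by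
  set m : ℝ := (Fintype.card α : ℝ) - 1
  have hcard : (#(univ.erase x) : ℝ) = m := by
    rw [Finset.cast_card_erase_of_mem (mem_univ x), Finset.card_univ]
  have herror : ∑ a ∈ univ.erase x, symmetricChannel e x a = m * (e / m) := by
    rw [← hcard, ← nsmul_eq_mul, ← Finset.sum_const, hcard]
    exact Finset.sum_congr rfl fun a ha => if_neg (Finset.ne_of_mem_erase ha).symm
  have hcorrect : symmetricChannel e x x = 1 - e := if_pos rfl
  have hmul : m * (e / m) ≤ e := by
    rw [mul_div_left_comm]
    exact mul_le_of_le_one_right he (div_self_le_one m)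
  rw [← Finset.add_sum_erase _ _ (mem_univ x), herror, hcorrect]
  linarith

end SymmetricChannel

variable {Ω : Type*} [Fintype Ω] {p : Ω → ℝ}

theorem pr_nonneg (hp : ∀ ω, 0 ≤ p ω) (S : Ω → Prop) : 0 ≤ pr p S :=
  Finset.sum_nonneg fun ω _ => by split_ifs <;> simp [hp ω]

theorem pr_mono (hp : ∀ ω, 0 ≤ p ω) {S T : Ω → Prop} (hST : ∀ ω, S ω → T ω) :
    pr p S ≤ pr p T := by
  refine Finset.sum_le_sum fun ω _ => ?_
  split_ifs with hS hT
  exacts [le_rfl, absurd (hST ω hS) hT, hp ω, le_rfl]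

theorem le_pr (hp : ∀ ω, 0 ≤ p ω) {S : Ω → Prop} {ω : Ω} (hω : S ω) : p ω ≤ pr p S := by
  have hterm := Finset.single_le_sum (f := fun ω' => if S ω' then p ω' else 0)
    (fun ω' _ => by split_ifs <;> simp [hp ω']) (mem_univ ω)
  rwa [if_pos hω] at hterm

theorem exists_of_pr_ne_zero {S : Ω → Prop} (hS : pr p S ≠ 0) : ∃ ω, S ω := by
  obtain ⟨ω, -, hω⟩ := Finset.exists_ne_zero_of_sum_ne_zero hS
  exact ⟨ω, (ite_ne_right_iff.1 hω).1⟩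

theorem sum_mul_ite (p : Ω → ℝ) (S : Ω → Prop) (x y : ℝ) :
    ∑ ω, p ω * (if S ω then x else y) = pr p S * x + pr p (fun ω => ¬ S ω) * y := by
  rw [pr, pr, Finset.sum_mul, Finset.sum_mul, ← Finset.sum_add_distrib]
  exact Finset.sum_congr rfl fun ω _ => by split_ifs <;> simp

theorem pr_add_pr_not (p : Ω → ℝ) (S : Ω → Prop) :
    pr p S + pr p (fun ω => ¬ S ω) = ∑ ω, p ω := by
  simpa only [ite_self, mul_one] using (sum_mul_ite p S 1 1).symm

theorem distOf_nonneg (hp : ∀ ω, 0 ≤ p ω) {α : Type*} (X : Ω → α) (a : α) : 0 ≤ distOf p X a :=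
  pr_nonneg hp _

theorem le_distOf (hp : ∀ ω, 0 ≤ p ω) {α : Type*} (X : Ω → α) (ω : Ω) : p ω ≤ distOf p X (X ω) :=
  le_pr hp rfl

section Entropy

variable {α β γ : Type*} [Fintype α] [Fintype β] [Fintype γ]

theorem sum_distOf_mul (p : Ω → ℝ) (X : Ω → α) (f : α → ℝ) :
    ∑ a, distOf p X a * f a = ∑ ω, p ω * f (X ω) := by
  simp only [distOf, pr, Finset.sum_mul, ite_mul, zero_mul]
  rw [Finset.sum_comm]
  simp only [Finset.sum_ite_eq, mem_univ, if_true]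

theorem sum_distOf (p : Ω → ℝ) (X : Ω → α) : ∑ a, distOf p X a = ∑ ω, p ω := by
  simpa only [mul_one] using sum_distOf_mul p X fun _ => 1

theorem H_eq_neg_sum_mul_logb_distOf (p : Ω → ℝ) (X : Ω → α) :
    H p X = -∑ ω, p ω * Real.logb 2 (distOf p X (X ω)) := by
  rw [H, sum_distOf_mul p X fun a => Real.logb 2 (distOf p X a)]

theorem H_comp_le (hp : ∀ ω, 0 ≤ p ω) (X : Ω → α) (f : α → β) :
    H p (fun ω => f (X ω)) ≤ H p X := by
  rw [H_eq_neg_sum_mul_logb_distOf, H_eq_neg_sum_mul_logb_distOf, neg_le_neg_iff]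
  refine Finset.sum_le_sum fun ω _ => ?_
  rcases (hp ω).eq_or_lt with hω | hω
  · simp only [← hω, zero_mul, le_refl]
  have hpos : 0 < distOf p X (X ω) := hω.trans_le (le_distOf hp X ω)
  have hle : distOf p X (X ω) ≤ distOf p (fun ω => f (X ω)) (f (X ω)) :=
    pr_mono hp fun _ h => congrArg f h
  exact mul_le_mul_of_nonneg_left (Real.logb_le_logb_of_le one_lt_two hpos hle) hω.le

theorem H_le_neg_sum_mul_logb (hp : ∀ ω, 0 ≤ p ω) (X : Ω → α) {Q : α → ℝ} (hQ : ∀ a, 0 ≤ Q a)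
    (hQsum : ∑ a, Q a ≤ ∑ ω, p ω) (hpQ : ∀ ω, Q (X ω) = 0 → p ω = 0) :
    H p X ≤ -∑ ω, p ω * Real.logb 2 (Q (X ω)) := by
  rw [H, ← sum_distOf_mul p X fun a => Real.logb 2 (Q a), neg_le_neg_iff]
  have hsupport : ∀ a, Q a = 0 → distOf p X a = 0 := by
    intro a ha
    refine Finset.sum_eq_zero fun ω _ => ite_eq_right_iff.2 ?_
    rintro rfl
    exact hpQ ω ha
  exact sum_mul_logb_le_sum_mul_logb_self one_lt_two (fun a _ => distOf_nonneg hp X a)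
    (fun a _ => hQ a) (fun a _ => hsupport a) (hQsum.trans_eq (sum_distOf p X).symm)

theorem condH_le_condH_add_condH (hp : ∀ ω, 0 ≤ p ω) (X : Ω → α) (Y : Ω → β) (Z : Ω → γ) :
    condH p X Z ≤ condH p Y Z + condH p X (fun ω => (Y ω, Z ω)) := by
  have hmarginal : H p (fun ω => (X ω, Z ω)) ≤ H p (fun ω => (X ω, (Y ω, Z ω))) :=
    H_comp_le hp (fun ω => (X ω, (Y ω, Z ω))) fun x => (x.1, x.2.2)
  simp only [condH]
  linarith

theorem condH_le_neg_sum_mul_logb (hp : ∀ ω, 0 ≤ p ω) (X : Ω → α) (Z : Ω → β) {K : β → α → ℝ}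
    (hK : ∀ z a, 0 ≤ K z a) (hKsum : ∀ z, ∑ a, K z a ≤ 1)
    (hpK : ∀ ω, K (Z ω) (X ω) = 0 → p ω = 0) :
    condH p X Z ≤ -∑ ω, p ω * Real.logb 2 (K (Z ω) (X ω)) := by
  have hQsum : ∑ x : α × β, distOf p Z x.2 * K x.2 x.1 ≤ ∑ ω, p ω := by
    rw [Fintype.sum_prod_type_right, ← sum_distOf p Z]
    refine Finset.sum_le_sum fun z _ => ?_
    simp only [← Finset.mul_sum]
    exact mul_le_of_le_one_right (distOf_nonneg hp Z z) (hKsum z)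
  have hdist : ∀ ω, distOf p Z (Z ω) = 0 → p ω = 0 := fun ω hω =>
    le_antisymm ((le_distOf hp Z ω).trans_eq hω) (hp ω)
  have hgibbs := H_le_neg_sum_mul_logb hp (fun ω => (X ω, Z ω))
    (fun x => mul_nonneg (distOf_nonneg hp Z x.2) (hK x.2 x.1)) hQsum
    fun ω hω => (mul_eq_zero.1 hω).elim (hdist ω) (hpK ω)
  have hlog : ∀ ω, p ω * Real.logb 2 (distOf p Z (Z ω) * K (Z ω) (X ω)) =
      p ω * Real.logb 2 (distOf p Z (Z ω)) + p ω * Real.logb 2 (K (Z ω) (X ω)) := by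
    intro ω
    by_cases hω : p ω = 0
    · simp only [hω, zero_mul, add_zero]
    · rw [Real.logb_mul (mt (hdist ω) hω) (mt (hpK ω) hω), mul_add]
  simp only [hlog, Finset.sum_add_distrib] at hgibbs
  rw [condH, H_eq_neg_sum_mul_logb_distOf p Z]
  linarith

end Entropy

section Fano

variable {α β : Type*} [Fintype α]

theorem sum_mul_logb_symmetricChannel (p : Ω → ℝ) (e : ℝ) (X Y : Ω → α) :
    ∑ ω, p ω * Real.logb 2 (symmetricChannel e (Y ω) (X ω)) =
      pr p (fun ω => Y ω = X ω) * Real.logb 2 (1 - e) +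
        pr p (fun ω => Y ω ≠ X ω) * Real.logb 2 (e / ((Fintype.card α : ℝ) - 1)) := by
  simp only [symmetricChannel, apply_ite (Real.logb 2)]
  exact sum_mul_ite p (fun ω => Y ω = X ω) _ _

theorem condH_le_fano [Fintype β] (hp : ∀ ω, 0 ≤ p ω) (hsum : ∑ ω, p ω = 1)
    (X : Ω → α) (Z : Ω → β) (f : β → α) :
    condH p X Z ≤ binEnt (pr p fun ω => f (Z ω) ≠ X ω) +
      pr p (fun ω => f (Z ω) ≠ X ω) * Real.logb 2 ((Fintype.card α : ℝ) - 1) := by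
  set e := pr p fun ω => f (Z ω) ≠ X ω with he
  have hcorrect : pr p (fun ω => f (Z ω) = X ω) = 1 - e := by
    rw [← hsum, ← pr_add_pr_not p fun ω => f (Z ω) = X ω, add_sub_cancel_right]
  have he₀ : 0 ≤ e := pr_nonneg hp _
  have he₁ : e ≤ 1 := sub_nonneg.1 (hcorrect ▸ pr_nonneg hp _)
  have hsupport : ∀ ω, symmetricChannel e (f (Z ω)) (X ω) = 0 → p ω = 0 := by
    intro ω hω
    refine le_antisymm ?_ (hp ω)
    by_cases hfX : f (Z ω) = X ω
    · rw [symmetricChannel, if_pos hfX] at hω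
      exact (le_pr hp hfX).trans_eq (hcorrect.trans hω)
    · rw [symmetricChannel, if_neg hfX, div_eq_zero_iff] at hω
      exact (le_pr hp hfX).trans_eq (hω.resolve_right (card_sub_one_ne_zero_of_ne hfX))
  have hgibbs := condH_le_neg_sum_mul_logb hp X Z (K := fun z => symmetricChannel e (f z))
    (fun z => symmetricChannel_nonneg he₀ he₁ (f z))
    (fun z => sum_symmetricChannel_le_one he₀ (f z)) hsupport
  have hlog : e * Real.logb 2 (e / ((Fintype.card α : ℝ) - 1)) =
      e * Real.logb 2 e - e * Real.logb 2 ((Fintype.card α : ℝ) - 1) := by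
    by_cases hzero : e = 0
    · simp only [hzero, zero_mul, sub_zero]
    · obtain ⟨ω, hω⟩ := exists_of_pr_ne_zero hzero
      rw [Real.logb_div hzero (card_sub_one_ne_zero_of_ne hω), mul_sub]
  rw [sum_mul_logb_symmetricChannel p e X fun ω => f (Z ω), ← he, hcorrect, hlog] at hgibbs
  rw [binEnt]
  linarith

end Fano

end InfoQA

theorem plug_in_accuracy_bound_general
    {Ω 𝒜 𝒴 𝒲 : Type*} [Fintype Ω] [Fintype 𝒜] [Fintype 𝒴] [Fintype 𝒲]
    {p : Ω → ℝ} (hp : ∀ ω, 0 ≤ p ω) (hsum : ∑ ω, p ω = 1)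
    (A : Ω → 𝒜) (Y : Ω → 𝒴) (W : Ω → 𝒲) (g : 𝒴 × 𝒲 → 𝒜) {D : ℝ} (hD : 0 < D)
    (hdemand : D ≤ condH p A W) (hlog : Real.logb 2 ((Fintype.card 𝒜 : ℝ) - 1) ≤ D) :
    1 - pr p (fun ω => g (Y ω, W ω) ≠ A ω) ≤ min 1 ((condH p Y W + 1) / D) := by
  set e := pr p fun ω => g (Y ω, W ω) ≠ A ω
  have he : 0 ≤ e := pr_nonneg hp _
  have hfano : condH p A (fun ω => (Y ω, W ω)) ≤
      binEnt e + e * Real.logb 2 ((Fintype.card 𝒜 : ℝ) - 1) := condH_le_fano hp hsum A _ g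
  have hbound : D ≤ condH p Y W + 1 + e * D :=
    calc D ≤ condH p A W := hdemand
      _ ≤ condH p Y W + condH p A (fun ω => (Y ω, W ω)) := condH_le_condH_add_condH hp A Y W
      _ ≤ condH p Y W + (binEnt e + e * Real.logb 2 ((Fintype.card 𝒜 : ℝ) - 1)) := by gcongr
      _ ≤ condH p Y W + (1 + e * D) := by gcongr; exact binEnt_le_one e
      _ = condH p Y W + 1 + e * D := by ring
  refine le_min (sub_le_self 1 he) ((le_div_iff₀ hD).2 ?_)
  linarith

/-- Plug-in accuracy bound: if `H(A | W) = β₀ + α·L·γ^{h−1}` and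
`log₂(|𝒜| − 1) ≤ β₀ + α·L·γ^{h−1}`, then
`Acc ≤ min{1, (C + 1)/(β₀ + α·L·γ^{h−1})}` with `C = H(Y | W)`. -/
theorem plug_in_accuracy_bound
    {Ω 𝒜 𝒴 𝒲 : Type*} [Fintype Ω] [Fintype 𝒜] [Fintype 𝒴] [Fintype 𝒲]
    (p : Ω → ℝ) (hp : ∀ ω, 0 ≤ p ω) (hsum : ∑ ω, p ω = 1)
    (hcard : 2 ≤ Fintype.card 𝒜)
    (A : Ω → 𝒜) (Y : Ω → 𝒴) (W : Ω → 𝒲) (g : 𝒴 → 𝒜)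
    (h : ℕ) (hh : 1 ≤ h) (L : ℝ) (hL : 0 < L)
    (β₀ α γ : ℝ) (hβ₀ : 0 ≤ β₀) (hα : 0 < α) (hγ : 1 ≤ γ)
    (hdemand : condH p A W = β₀ + α * L * γ ^ (h - 1))
    (hlog : Real.logb 2 ((Fintype.card 𝒜 : ℝ) - 1) ≤ β₀ + α * L * γ ^ (h - 1)) :
    1 - pr p (fun ω => g (Y ω) ≠ A ω) ≤
      min 1 ((condH p Y W + 1) / (β₀ + α * L * γ ^ (h - 1))) :=
  plug_in_accuracy_bound_general hp hsum A Y W (fun z => g z.1) (by positivity)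
    hdemand.ge hlog
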